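/- Let d ≥ 1 be an integer, let p, q ∈ [1,2], let s > -d/p and r > s + d/q, and set θ = (s + d/p)/(r + d(1/p - 1/q)). Then θ ∈ (0,1) and there is a constant C = C(d,p,q,s,r) > 0 such that for every Schwartz function f : ℝ^d → ℂ one has ‖f‖_s ≤ C ‖f‖_{L^p(ℝ^d)}^{1-θ} ‖|∇|^r f‖_{L^q(ℝ^d)}^{θ}, where |∇|^r f denotes the function whose Fourier transform is |ξ|^r f̂(ξ). -/

import Mathlib

open MeasureTheory Real FourierTransform
open scoped FourierTransform ENNReal

noncomputable section

/-- The `s`-norm `‖f‖ₛ = ∫_{ℝ^d} |ξ|^s |f̂(ξ)| dξ`, where `f̂ = 𝓕 f` is the Fourier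
transform `f̂(ξ) = ∫ f(x) e^{-2πi x·ξ} dx`. -/
noncomputable def sNorm (d : ℕ) (s : ℝ) (f : EuclideanSpace ℝ (Fin d) → ℂ) : ℝ :=
  ∫ ξ : EuclideanSpace ℝ (Fin d), ‖ξ‖ ^ s * ‖𝓕 f ξ‖

/-- `|∇|^r f`, the function whose Fourier transform is `|ξ|^r f̂(ξ)`, realized as the
inverse Fourier transform of `ξ ↦ |ξ|^r f̂(ξ)`. -/
noncomputable def fracLap (d : ℕ) (r : ℝ) (f : EuclideanSpace ℝ (Fin d) → ℂ) :
    EuclideanSpace ℝ (Fin d) → ℂ :=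
  𝓕⁻ fun ξ => (‖ξ‖ ^ r : ℝ) * 𝓕 f ξ

/-! For a set `B` of finite measure, testing `f̂` against `1_B f̂ / |f̂|` and using Plancherel gives
`∫_B |f̂| ≤ |B|^{1/q} ‖f‖_q` for `1 ≤ q ≤ 2`: the transform of the test function is bounded by `|B|`
in `L^∞` and by `|B|^{1/2}` in `L²`, so Hölder's inequality suffices and no interpolation of
operators is needed. Summing this over dyadic shells, for `f` inside the ball of radius `R` and for
`|∇|^r f` outside it, bounds `‖f‖_s` by a constant times
`R^{s + d/p} ‖f‖_p + R^{s - r + d/q} ‖|∇|^r f‖_q`, and the optimal `R` gives the inequality.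

With real-valued norms this needs `‖|∇|^r f‖_q < ∞`. Write `|ξ|^r = L(ξ) + h(ξ)` with `h` smooth of
temperate growth and `L` integrable and compactly supported. By homogeneity `L(ξ) - 2^{-r} L(2ξ)` is
a Schwartz function, and iterating this relation shows that the inverse transform of `L` is
`O((1 + |x|)^{-a})` for every `0 ≤ a < r + d`; convolution with `f` preserves this decay. -/

section

open Module Filter Metric Asymptotics
open scoped SchwartzMap ComplexInnerProductSpace

variable {V : Type*} [NormedAddCommGroup V] [InnerProductSpace ℝ V] [FiniteDimensional ℝ V]
  [MeasurableSpace V] [BorelSpace V]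

section Plancherel

lemma continuous_fourier_of_integrable {f : V → ℂ} (hf : Integrable f) : Continuous (𝓕 f) :=
  VectorFourier.fourierIntegral_continuous continuous_fourierChar (L := innerₗ V)
    continuous_inner hf

lemma norm_fourierInv_le_integral_norm (f : V → ℂ) (x : V) : ‖𝓕⁻ f x‖ ≤ ∫ y, ‖f y‖ := by
  rw [fourierInv_eq_fourier_neg]
  exact VectorFourier.norm_fourierIntegral_le_integral_norm _ _ _ _ _

lemma continuous_fourierInv_of_integrable {f : V → ℂ} (hf : Integrable f) :
    Continuous (𝓕⁻ f) := by
  simp only [funext (fourierInv_eq_fourier_neg f)]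
  exact (continuous_fourier_of_integrable hf).comp continuous_neg

lemma fourierInv_add_of_integrable {f g : V → ℂ} (hf : Integrable f) (hg : Integrable g) :
    𝓕⁻ (f + g) = 𝓕⁻ f + 𝓕⁻ g := by
  ext x
  simp only [fourierInv_eq_fourier_neg, Pi.add_apply]
  exact congrFun (VectorFourier.fourierIntegral_add continuous_fourierChar (L := innerₗ V)
    continuous_inner hf hg) (-x)

lemma fourierInv_const_smul (c : ℂ) (f : V → ℂ) : 𝓕⁻ (c • f) = c • 𝓕⁻ f := by
  ext x
  simp only [fourierInv_eq_fourier_neg, Pi.smul_apply]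
  exact congrFun (VectorFourier.fourierIntegral_const_smul 𝐞 volume (innerₗ V) f c) (-x)

lemma eLpNorm_fourierInv_eq_eLpNorm_fourier {f : V → ℂ} (hf : Integrable f) (q : ℝ≥0∞) :
    eLpNorm (𝓕⁻ f) q = eLpNorm (𝓕 f) q := by
  rw [funext (fourierInv_eq_fourier_neg f)]
  exact eLpNorm_comp_measurePreserving (continuous_fourier_of_integrable hf).aestronglyMeasurable
    (Measure.measurePreserving_neg volume)

lemma integral_fourier_mul_toLp {f : V → ℂ} (hf : MemLp f 2) (φ : 𝓢(V, ℂ)) :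
    ∫ ξ, φ ξ * (𝓕 (hf.toLp f) : Lp ℂ 2 (volume : Measure V)) ξ = ∫ x, 𝓕 φ x * f x := by
  have h := congrArg (fun T ↦ T φ) (Lp.fourier_toTemperedDistribution_eq (hf.toLp f))
  simp only [TemperedDistribution.fourier_apply, Lp.toTemperedDistribution_apply,
    smul_eq_mul] at h
  rw [← h]
  refine integral_congr_ae ?_
  filter_upwards [hf.coeFn_toLp] with x hx
  rw [hx]

lemma coeFn_fourier_toLp_ae_eq {f : V → ℂ} (h₁ : Integrable f) (h₂ : MemLp f 2) :
    (𝓕 (h₂.toLp f) : Lp ℂ 2 (volume : Measure V)) =ᵐ[volume] 𝓕 f := by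
  refine ae_eq_of_integral_contDiff_smul_eq ((Lp.memLp _).locallyIntegrable (by norm_num))
    (continuous_fourier_of_integrable h₁).locallyIntegrable fun g hg hgc ↦ ?_
  let φ : 𝓢(V, ℂ) := (hgc.comp_left (g := Complex.ofReal) rfl).toSchwartzMap
    (Complex.ofRealCLM.contDiff.comp hg)
  calc ∫ ξ, g ξ • (𝓕 (h₂.toLp f) : Lp ℂ 2 (volume : Measure V)) ξ
      = ∫ x, 𝓕 (φ : V → ℂ) x * f x := by
        simpa only [Complex.real_smul, SchwartzMap.fourier_coe] using!
          integral_fourier_mul_toLp h₂ φ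
    _ = ∫ ξ, g ξ • 𝓕 f ξ := by
        simp only [Complex.real_smul]
        simpa using! VectorFourier.integral_bilin_fourierIntegral_eq_flip (.mul ℂ ℂ)
          (L := innerₗ V) continuous_fourierChar continuous_inner φ.integrable h₁

lemma eLpNorm_fourier_two {f : V → ℂ} (h₁ : Integrable f) (h₂ : MemLp f 2) :
    eLpNorm (𝓕 f) 2 = eLpNorm f 2 := by
  rw [← eLpNorm_congr_ae (coeFn_fourier_toLp_ae_eq h₁ h₂), ← eLpNorm_congr_ae h₂.coeFn_toLp]
  have h := Lp.norm_fourier_eq (h₂.toLp f)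
  rwa [Lp.norm_def, Lp.norm_def, ENNReal.toReal_eq_toReal_iff' (Lp.eLpNorm_ne_top _)
    (Lp.eLpNorm_ne_top _)] at h

lemma integral_inner_fourier_eq {f g : V → ℂ} (hf₁ : Integrable f) (hf₂ : MemLp f 2)
    (hg₁ : Integrable g) (hg₂ : MemLp g 2) :
    ∫ ξ, ⟪𝓕 f ξ, 𝓕 g ξ⟫ = ∫ x, ⟪f x, g x⟫ := by
  have h := Lp.inner_fourier_eq (hf₂.toLp f) (hg₂.toLp g)
  rw [L2.inner_def, L2.inner_def] at h
  convert h using 1 <;> refine integral_congr_ae ?_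
  · filter_upwards [coeFn_fourier_toLp_ae_eq hf₁ hf₂, coeFn_fourier_toLp_ae_eq hg₁ hg₂]
      with ξ h₁ h₂
    rw [h₁, h₂]
  · filter_upwards [hf₂.coeFn_toLp, hg₂.coeFn_toLp] with x h₁ h₂
    rw [h₁, h₂]

end Plancherel

section HausdorffYoung

lemma lintegral_mul_le_rpow_mul_of_ae_le {α : Type*} [MeasurableSpace α] {μ : Measure α}
    {u v : α → ℝ≥0∞} (hu : AEMeasurable u μ) (hv : AEMeasurable v μ) {M : ℝ≥0∞}
    (hM : ∀ᵐ x ∂μ, u x ≤ M) {q : ℝ} (hq : q ∈ Set.Icc (1 : ℝ) 2) :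
    ∫⁻ x, u x * v x ∂μ ≤
      M ^ (2 / q - 1) * ((∫⁻ x, u x ^ (2 : ℝ) ∂μ) ^ (1 - 1 / q) *
        (∫⁻ x, v x ^ q ∂μ) ^ (1 / q)) := by
  have hq₀ : 0 < q := by linarith [hq.1]
  have h₁ : 0 ≤ 2 / q - 1 := by rw [sub_nonneg, le_div_iff₀ hq₀]; linarith [hq.2]
  have h₂ : 0 ≤ 1 - 1 / q := by rw [sub_nonneg, div_le_iff₀ hq₀]; linarith [hq.1]
  calc ∫⁻ x, u x * v x ∂μ
      ≤ ∫⁻ x, M ^ (2 / q - 1) * ((u x ^ (2 : ℝ)) ^ (1 - 1 / q) * (v x ^ q) ^ (1 / q)) ∂μ := by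
        refine lintegral_mono_ae ?_
        filter_upwards [hM] with x hx
        rw [← ENNReal.rpow_mul, ← ENNReal.rpow_mul, mul_one_div_cancel hq₀.ne', ENNReal.rpow_one,
          ← mul_assoc]
        gcongr
        calc u x = u x ^ (2 / q - 1) * u x ^ (2 * (1 - 1 / q)) := by
              rw [← ENNReal.rpow_add_of_nonneg _ _ h₁ (by positivity)]
              ring_nf
              exact (ENNReal.rpow_one _).symm
          _ ≤ M ^ (2 / q - 1) * u x ^ (2 * (1 - 1 / q)) := by gcongr
    _ = M ^ (2 / q - 1) * ∫⁻ x, (u x ^ (2 : ℝ)) ^ (1 - 1 / q) * (v x ^ q) ^ (1 / q) ∂μ :=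
        lintegral_const_mul'' _ (by fun_prop)
    _ ≤ _ := by
        gcongr
        exact ENNReal.lintegral_mul_norm_pow_le (by fun_prop) (by fun_prop) h₂ (by positivity)
          (by ring)

lemma enorm_le_indicator_one {α : Type*} {B : Set α} {h : α → ℂ}
    (hh : ∀ x, ‖h x‖ ≤ B.indicator 1 x) (x : α) :
    ‖h x‖ₑ ≤ B.indicator 1 x := by
  have hx := ENNReal.ofReal_le_ofReal (hh x)
  rw [ofReal_norm] at hx
  by_cases hxB : x ∈ B <;> simpa [hxB] using hx

variable {B : Set V} {h : V → ℂ}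

lemma memLp_of_norm_le_indicator_one (hB : MeasurableSet B) (hB' : volume B ≠ ∞)
    (hm : AEStronglyMeasurable h) (hh : ∀ x, ‖h x‖ ≤ B.indicator 1 x) (p : ℝ≥0∞) :
    MemLp h p := by
  refine (memLp_indicator_const p hB (1 : ℝ) (.inr hB')).mono hm (.of_forall fun x ↦ ?_)
  exact (hh x).trans (le_abs_self _)

lemma enorm_fourier_le_measure (hB : MeasurableSet B) (hB' : volume B ≠ ∞)
    (hm : AEStronglyMeasurable h) (hh : ∀ x, ‖h x‖ ≤ B.indicator 1 x) (ξ : V) :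
    ‖𝓕 h ξ‖ₑ ≤ volume B := by
  have h₁ : Integrable h :=
    memLp_one_iff_integrable.1 (memLp_of_norm_le_indicator_one hB hB' hm hh 1)
  calc ‖𝓕 h ξ‖ₑ ≤ ∫⁻ x, ‖h x‖ₑ := by
        rw [← ofReal_norm, ← ofReal_integral_norm_eq_lintegral_enorm h₁]
        exact ENNReal.ofReal_le_ofReal
          (VectorFourier.norm_fourierIntegral_le_integral_norm _ _ _ _ _)
    _ ≤ ∫⁻ x, B.indicator 1 x := lintegral_mono (enorm_le_indicator_one hh)
    _ = volume B := lintegral_indicator_one hB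

lemma lintegral_enorm_fourier_rpow_two_le_measure (hB : MeasurableSet B) (hB' : volume B ≠ ∞)
    (hm : AEStronglyMeasurable h) (hh : ∀ x, ‖h x‖ ≤ B.indicator 1 x) :
    ∫⁻ ξ, ‖𝓕 h ξ‖ₑ ^ (2 : ℝ) ≤ volume B := by
  have hmem := memLp_of_norm_le_indicator_one hB hB' hm hh
  have heq := eLpNorm_fourier_two (memLp_one_iff_integrable.1 (hmem 1)) (hmem 2)
  simp only [eLpNorm_eq_lintegral_rpow_enorm_toReal two_ne_zero ENNReal.ofNat_ne_top,
    ENNReal.toReal_ofNat] at heq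
  rw [ENNReal.rpow_left_injective (by norm_num) heq, ← lintegral_indicator_one hB]
  refine lintegral_mono fun x ↦ ?_
  calc ‖h x‖ₑ ^ (2 : ℝ) ≤ B.indicator 1 x ^ (2 : ℝ) := by
        gcongr
        exact enorm_le_indicator_one hh x
    _ ≤ B.indicator 1 x := by by_cases hx : x ∈ B <;> simp [hx]

lemma lintegral_enorm_fourier_mul_le (hB : MeasurableSet B) (hB' : volume B ≠ ∞)
    (hm : AEStronglyMeasurable h) (hh : ∀ x, ‖h x‖ ≤ B.indicator 1 x)
    {v : V → ℝ≥0∞} (hv : AEMeasurable v) {q : ℝ} (hq : q ∈ Set.Icc (1 : ℝ) 2) :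
    ∫⁻ ξ, ‖𝓕 h ξ‖ₑ * v ξ ≤ volume B ^ (1 / q) * (∫⁻ ξ, v ξ ^ q) ^ (1 / q) := by
  have h₁ : Integrable h :=
    memLp_one_iff_integrable.1 (memLp_of_norm_le_indicator_one hB hB' hm hh 1)
  have hq₀ : 0 < q := by linarith [hq.1]
  have he₁ : 0 ≤ 2 / q - 1 := by rw [sub_nonneg, le_div_iff₀ hq₀]; linarith [hq.2]
  have he₂ : 0 ≤ 1 - 1 / q := by rw [sub_nonneg, div_le_iff₀ hq₀]; linarith [hq.1]
  calc ∫⁻ ξ, ‖𝓕 h ξ‖ₑ * v ξ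
      ≤ volume B ^ (2 / q - 1) * ((∫⁻ ξ, ‖𝓕 h ξ‖ₑ ^ (2 : ℝ)) ^ (1 - 1 / q) *
          (∫⁻ ξ, v ξ ^ q) ^ (1 / q)) :=
        lintegral_mul_le_rpow_mul_of_ae_le
          (continuous_fourier_of_integrable h₁).enorm.aemeasurable hv
          (.of_forall (enorm_fourier_le_measure hB hB' hm hh)) hq
    _ ≤ volume B ^ (2 / q - 1) * (volume B ^ (1 - 1 / q) * (∫⁻ ξ, v ξ ^ q) ^ (1 / q)) := by
        gcongr
        exact lintegral_enorm_fourier_rpow_two_le_measure hB hB' hm hh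
    _ = volume B ^ (1 / q) * (∫⁻ ξ, v ξ ^ q) ^ (1 / q) := by
        rw [← mul_assoc, ← ENNReal.rpow_add_of_nonneg _ _ he₁ he₂]
        ring_nf

lemma exists_norm_le_indicator_one_inner_eq {g : V → ℂ} (hg : AEStronglyMeasurable g)
    (hB : MeasurableSet B) :
    ∃ h : V → ℂ, AEStronglyMeasurable h ∧ (∀ ξ, ‖h ξ‖ ≤ B.indicator 1 ξ) ∧
      ∀ ξ, ⟪h ξ, g ξ⟫ = B.indicator (fun ξ ↦ (‖g ξ‖ : ℂ)) ξ := by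
  refine ⟨B.indicator fun ξ ↦ ((‖g ξ‖⁻¹ : ℝ) : ℂ) * g ξ, ?_, fun ξ ↦ ?_, fun ξ ↦ ?_⟩
  · exact (((Complex.continuous_ofReal.measurable.comp_aemeasurable
      hg.norm.aemeasurable.inv).aestronglyMeasurable).mul hg).indicator hB
  · by_cases hξ : ξ ∈ B <;> simp [hξ, inv_mul_le_one]
  · by_cases hξ : ξ ∈ B
    · rw [Set.indicator_of_mem hξ, Set.indicator_of_mem hξ, ← smul_eq_mul, inner_smul_left,
        inner_self_eq_norm_sq_to_K, Complex.conj_ofReal,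
        Complex.ofReal_inv, sq, ← mul_assoc]
      by_cases h0 : (‖g ξ‖ : ℂ) = 0 <;> simp [h0]
    · simp [hξ]

lemma setLIntegral_enorm_le_eLpNorm_fourier {g : V → ℂ} (h₁ : Integrable g) (h₂ : MemLp g 2)
    (hB : MeasurableSet B) (hB' : volume B ≠ ∞) {q : ℝ} (hq : q ∈ Set.Icc (1 : ℝ) 2) :
    ∫⁻ ξ in B, ‖g ξ‖ₑ ≤ volume B ^ (1 / q) * eLpNorm (𝓕 g) (ENNReal.ofReal q) volume := by
  obtain ⟨h, hm, hh, hinner⟩ := exists_norm_le_indicator_one_inner_eq h₁.1 hB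
  have hmem := memLp_of_norm_le_indicator_one hB hB' hm hh
  have hq₀ : 0 < q := by linarith [hq.1]
  calc ∫⁻ ξ in B, ‖g ξ‖ₑ = ‖∫ ξ, ⟪h ξ, g ξ⟫‖ₑ := by
        simp only [hinner]
        rw [integral_indicator hB, integral_complex_ofReal, ← ofReal_norm, Complex.norm_real,
          Real.norm_of_nonneg (integral_nonneg fun ξ ↦ norm_nonneg _),
          ofReal_integral_norm_eq_lintegral_enorm h₁.integrableOn]
    _ = ‖∫ ξ, ⟪𝓕 h ξ, 𝓕 g ξ⟫‖ₑ := by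
        rw [integral_inner_fourier_eq (memLp_one_iff_integrable.1 (hmem 1)) (hmem 2) h₁ h₂]
    _ ≤ ∫⁻ ξ, ‖𝓕 h ξ‖ₑ * ‖𝓕 g ξ‖ₑ := by
        refine (enorm_integral_le_lintegral_enorm _).trans (lintegral_mono fun ξ ↦ ?_)
        simp [enorm_mul, mul_comm]
    _ ≤ volume B ^ (1 / q) * (∫⁻ ξ, ‖𝓕 g ξ‖ₑ ^ q) ^ (1 / q) :=
        lintegral_enorm_fourier_mul_le hB hB' hm hh
          (continuous_fourier_of_integrable h₁).enorm.aemeasurable hq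
    _ = volume B ^ (1 / q) * eLpNorm (𝓕 g) (ENNReal.ofReal q) volume := by
        rw [eLpNorm_eq_lintegral_rpow_enorm_toReal (by simpa using hq₀) ENNReal.ofReal_ne_top,
          ENNReal.toReal_ofReal hq₀.le]

end HausdorffYoung

section DyadicSummation

lemma rpow_le_two_rpow_abs_mul_rpow {x ρ : ℝ} (hρ : 0 < ρ) (h₁ : ρ / 2 ≤ x) (h₂ : x ≤ ρ)
    (s : ℝ) : x ^ s ≤ 2 ^ |s| * ρ ^ s := by
  rcases le_total 0 s with hs | hs
  · calc x ^ s ≤ 1 * ρ ^ s := by rw [one_mul]; gcongr; linarith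
      _ ≤ 2 ^ |s| * ρ ^ s := by gcongr; exact Real.one_le_rpow one_le_two (abs_nonneg s)
  · calc x ^ s ≤ (ρ / 2) ^ s := Real.rpow_le_rpow_of_nonpos (by positivity) h₁ hs
      _ = 2 ^ |s| * ρ ^ s := by
        rw [Real.div_rpow hρ.le zero_le_two, abs_of_nonpos hs, Real.rpow_neg zero_le_two,
          div_eq_inv_mul]

variable {E : Type*} [NormedAddCommGroup E]

variable (E) in
/-- The closed annulus `ρ / 2 ≤ ‖ξ‖ ≤ ρ`, the building block of the dyadic decomposition of
frequency space. -/
def dyadicShell (ρ : ℝ) : Set E := {ξ | ρ / 2 ≤ ‖ξ‖ ∧ ‖ξ‖ ≤ ρ}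

lemma closedBall_diff_zero_subset_iUnion_dyadicShell {R : ℝ} (hR : 0 < R) :
    closedBall 0 R \ {0} ⊆ ⋃ n : ℕ, dyadicShell E ((1 / 2) ^ n * R) := by
  rintro ξ ⟨hξR, hξ₀⟩
  obtain ⟨n, h₁, h₂⟩ := exists_nat_pow_near_of_lt_one (div_pos (norm_pos_iff.2 hξ₀) hR)
    ((div_le_one hR).2 (mem_closedBall_zero_iff.1 hξR)) (y := 1 / 2) (by norm_num) (by norm_num)
  rw [lt_div_iff₀ hR, pow_succ] at h₁
  rw [div_le_iff₀ hR] at h₂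
  exact Set.mem_iUnion.2 ⟨n, by linarith, h₂⟩

lemma compl_closedBall_subset_iUnion_dyadicShell {R : ℝ} (hR : 0 < R) :
    (closedBall 0 R)ᶜ ⊆ ⋃ n : ℕ, dyadicShell E (2 ^ n * (2 * R)) := by
  intro ξ hξ
  rw [Set.mem_compl_iff, mem_closedBall_zero_iff, not_le] at hξ
  obtain ⟨n, h₁, h₂⟩ := exists_nat_pow_near ((one_le_div hR).2 hξ.le) (one_lt_two (α := ℝ))
  rw [le_div_iff₀ hR] at h₁
  rw [div_lt_iff₀ hR, pow_succ] at h₂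
  exact Set.mem_iUnion.2 ⟨n, by linarith, by linarith⟩

variable [MeasurableSpace E] [OpensMeasurableSpace E] {μ : Measure E}

lemma measurableSet_dyadicShell (ρ : ℝ) : MeasurableSet (dyadicShell E ρ) :=
  (measurableSet_le measurable_const measurable_norm).inter
    (measurableSet_le measurable_norm measurable_const)

lemma setLIntegral_dyadicShell_le {F : E → ℝ≥0∞} {A : ℝ≥0∞} {a ρ : ℝ} (hρ : 0 < ρ)
    (hF : ∫⁻ ξ in closedBall 0 ρ, F ξ ∂μ ≤ A * .ofReal (ρ ^ a)) (s : ℝ) :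
    ∫⁻ ξ in dyadicShell E ρ, .ofReal (‖ξ‖ ^ s) * F ξ ∂μ ≤
      .ofReal (2 ^ |s|) * (A * .ofReal (ρ ^ (s + a))) := by
  calc ∫⁻ ξ in dyadicShell E ρ, .ofReal (‖ξ‖ ^ s) * F ξ ∂μ
      ≤ ∫⁻ ξ in dyadicShell E ρ, .ofReal (2 ^ |s| * ρ ^ s) * F ξ ∂μ := by
        refine setLIntegral_mono' (measurableSet_dyadicShell ρ) fun ξ hξ ↦ ?_
        gcongr
        exact rpow_le_two_rpow_abs_mul_rpow hρ hξ.1 hξ.2 s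
    _ = .ofReal (2 ^ |s| * ρ ^ s) * ∫⁻ ξ in dyadicShell E ρ, F ξ ∂μ :=
        lintegral_const_mul' _ _ ENNReal.ofReal_ne_top
    _ ≤ .ofReal (2 ^ |s| * ρ ^ s) * (A * .ofReal (ρ ^ a)) := by
        gcongr
        exact (lintegral_mono_set fun ξ hξ ↦ mem_closedBall_zero_iff.2 hξ.2).trans hF
    _ = .ofReal (2 ^ |s|) * (A * .ofReal (ρ ^ (s + a))) := by
        rw [Real.rpow_add hρ, ENNReal.ofReal_mul (by positivity),
          ENNReal.ofReal_mul (by positivity)]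
        ring

lemma setLIntegral_le_of_subset_iUnion_dyadicShell {F : E → ℝ≥0∞} {A : ℝ≥0∞} {a s c R : ℝ}
    {T : Set E} (hF : ∀ ρ > 0, ∫⁻ ξ in closedBall 0 ρ, F ξ ∂μ ≤ A * .ofReal (ρ ^ a))
    (hc : 0 < c) (hcs : c ^ (s + a) < 1) (hR : 0 < R)
    (hT : T ⊆ ⋃ n : ℕ, dyadicShell E (c ^ n * R)) :
    ∫⁻ ξ in T, .ofReal (‖ξ‖ ^ s) * F ξ ∂μ ≤
      .ofReal (2 ^ |s| * (1 - c ^ (s + a))⁻¹) * (A * .ofReal (R ^ (s + a))) := by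
  have hpow : ∀ n : ℕ, (c ^ n * R) ^ (s + a) = (c ^ (s + a)) ^ n * R ^ (s + a) := fun n ↦ by
    rw [Real.mul_rpow (by positivity) hR.le, ← Real.rpow_natCast_mul hc.le, mul_comm (n : ℝ),
      Real.rpow_mul_natCast hc.le]
  calc ∫⁻ ξ in T, .ofReal (‖ξ‖ ^ s) * F ξ ∂μ
      ≤ ∑' n : ℕ, ∫⁻ ξ in dyadicShell E (c ^ n * R), .ofReal (‖ξ‖ ^ s) * F ξ ∂μ :=
        (lintegral_mono_set hT).trans (lintegral_iUnion_le _ _)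
    _ ≤ ∑' n : ℕ, .ofReal (2 ^ |s|) *
          (A * (.ofReal ((c ^ (s + a)) ^ n) * .ofReal (R ^ (s + a)))) := by
        refine ENNReal.tsum_le_tsum fun n ↦ ?_
        rw [← ENNReal.ofReal_mul (by positivity), ← hpow]
        exact setLIntegral_dyadicShell_le (by positivity) (hF _ (by positivity)) s
    _ = .ofReal (2 ^ |s|) * (A * (.ofReal (∑' n : ℕ, (c ^ (s + a)) ^ n) *
          .ofReal (R ^ (s + a)))) := by
        rw [ENNReal.tsum_mul_left, ENNReal.tsum_mul_left, ENNReal.tsum_mul_right,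
          ENNReal.ofReal_tsum_of_nonneg (fun n ↦ by positivity)
            (summable_geometric_of_lt_one (by positivity) hcs)]
    _ = .ofReal (2 ^ |s| * (1 - c ^ (s + a))⁻¹) * (A * .ofReal (R ^ (s + a))) := by
        rw [tsum_geometric_of_lt_one (by positivity) hcs, ENNReal.ofReal_mul (by positivity)]
        ring

lemma setLIntegral_closedBall_rpow_norm_mul_le [NullSingletonClass μ] {F : E → ℝ≥0∞}
    {A : ℝ≥0∞} {a s R : ℝ} (hF : ∀ ρ > 0, ∫⁻ ξ in closedBall 0 ρ, F ξ ∂μ ≤ A * .ofReal (ρ ^ a))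
    (hsa : 0 < s + a) (hR : 0 < R) :
    ∫⁻ ξ in closedBall 0 R, .ofReal (‖ξ‖ ^ s) * F ξ ∂μ ≤
      .ofReal (2 ^ |s| * (1 - (1 / 2) ^ (s + a))⁻¹) * (A * .ofReal (R ^ (s + a))) := by
  rw [← setLIntegral_congr (sdiff_null_ae_eq_self (measure_singleton (0 : E)))]
  exact setLIntegral_le_of_subset_iUnion_dyadicShell hF (by norm_num)
    (Real.rpow_lt_one (by norm_num) (by norm_num) hsa) hR
    (closedBall_diff_zero_subset_iUnion_dyadicShell hR)

lemma setLIntegral_compl_closedBall_rpow_norm_mul_le {F : E → ℝ≥0∞} {B : ℝ≥0∞} {b r s R : ℝ}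
    (hF : ∀ ρ > 0, ∫⁻ ξ in closedBall 0 ρ, .ofReal (‖ξ‖ ^ r) * F ξ ∂μ ≤ B * .ofReal (ρ ^ b))
    (hsb : s - r + b < 0) (hR : 0 < R) :
    ∫⁻ ξ in (closedBall 0 R)ᶜ, .ofReal (‖ξ‖ ^ s) * F ξ ∂μ ≤
      .ofReal (2 ^ |s - r| * (1 - 2 ^ (s - r + b))⁻¹) * (B * .ofReal (R ^ (s - r + b))) := by
  calc ∫⁻ ξ in (closedBall 0 R)ᶜ, .ofReal (‖ξ‖ ^ s) * F ξ ∂μ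
      = ∫⁻ ξ in (closedBall 0 R)ᶜ, .ofReal (‖ξ‖ ^ (s - r)) * (.ofReal (‖ξ‖ ^ r) * F ξ) ∂μ := by
        refine setLIntegral_congr_fun measurableSet_closedBall.compl fun ξ hξ ↦ ?_
        rw [Set.mem_compl_iff, mem_closedBall_zero_iff, not_le] at hξ
        rw [← mul_assoc, ← ENNReal.ofReal_mul (by positivity), ← Real.rpow_add (hR.trans hξ),
          sub_add_cancel]
    _ ≤ .ofReal (2 ^ |s - r| * (1 - 2 ^ (s - r + b))⁻¹) *
          (B * .ofReal ((2 * R) ^ (s - r + b))) :=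
        setLIntegral_le_of_subset_iUnion_dyadicShell hF two_pos
          (Real.rpow_lt_one_of_one_lt_of_neg one_lt_two hsb) (by positivity)
          (compl_closedBall_subset_iUnion_dyadicShell hR)
    _ ≤ .ofReal (2 ^ |s - r| * (1 - 2 ^ (s - r + b))⁻¹) * (B * .ofReal (R ^ (s - r + b))) := by
        gcongr ENNReal.ofReal _ * (B * ENNReal.ofReal ?_)
        exact Real.rpow_le_rpow_of_nonpos hR (by linarith) hsb.le

lemma exists_lintegral_rpow_norm_mul_le [NullSingletonClass μ] {s r a b : ℝ} (hsa : 0 < s + a)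
    (hsb : s - r + b < 0) :
    ∃ K > 0, ∀ (F : E → ℝ≥0∞) (A B : ℝ≥0∞),
      (∀ ρ > 0, ∫⁻ ξ in closedBall 0 ρ, F ξ ∂μ ≤ A * .ofReal (ρ ^ a)) →
      (∀ ρ > 0, ∫⁻ ξ in closedBall 0 ρ, .ofReal (‖ξ‖ ^ r) * F ξ ∂μ ≤ B * .ofReal (ρ ^ b)) →
      ∀ R > 0, ∫⁻ ξ, .ofReal (‖ξ‖ ^ s) * F ξ ∂μ ≤
        .ofReal K * (A * .ofReal (R ^ (s + a)) + B * .ofReal (R ^ (s - r + b))) := by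
  let K₁ : ℝ := 2 ^ |s| * (1 - (1 / 2) ^ (s + a))⁻¹
  let K₂ : ℝ := 2 ^ |s - r| * (1 - 2 ^ (s - r + b))⁻¹
  have hK₁ : 0 < K₁ := mul_pos (by positivity) <| inv_pos.2 <| sub_pos.2 <|
    Real.rpow_lt_one (by norm_num) (by norm_num) hsa
  refine ⟨max K₁ K₂, lt_max_of_lt_left hK₁, fun F A B hA hB R hR ↦ ?_⟩
  rw [← lintegral_add_compl _ (measurableSet_closedBall (x := (0 : E)) (ε := R)), mul_add]
  refine add_le_add ?_ ?_
  · exact (setLIntegral_closedBall_rpow_norm_mul_le hA hsa hR).trans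
      (by gcongr; exact le_max_left K₁ K₂)
  · exact (setLIntegral_compl_closedBall_rpow_norm_mul_le hB hsb hR).trans
      (by gcongr; exact le_max_right K₁ K₂)

end DyadicSummation

section Optimization

lemma exists_pos_rpow_add_rpow_eq {A B α β : ℝ} (hA : 0 < A) (hB : 0 < B) (hαβ : α + β ≠ 0) :
    ∃ R > 0, A * R ^ α + B * R ^ (-β) = 2 * (A ^ (1 - α / (α + β)) * B ^ (α / (α + β))) := by
  refine ⟨(B / A) ^ (1 / (α + β)), by positivity, ?_⟩
  have hA' : A * ((B / A) ^ (1 / (α + β))) ^ α = A ^ (1 - α / (α + β)) * B ^ (α / (α + β)) := by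
    rw [← Real.rpow_mul (by positivity), one_div_mul_eq_div, Real.div_rpow hB.le hA.le,
      Real.rpow_sub hA, Real.rpow_one]
    ring
  have hB' : B * ((B / A) ^ (1 / (α + β))) ^ (-β) =
      A ^ (1 - α / (α + β)) * B ^ (α / (α + β)) := by
    have hexp : 1 / (α + β) * -β = α / (α + β) - 1 := by field_simp; ring
    rw [← Real.rpow_mul (by positivity), hexp, Real.div_rpow hB.le hA.le, Real.rpow_sub hA,
      Real.rpow_sub hA, Real.rpow_sub hB, Real.rpow_one, Real.rpow_one]
    field_simp
  rw [hA', hB', two_mul]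

lemma le_two_mul_rpow_mul_rpow_of_forall_le {X A B α β : ℝ} (hα : 0 < α) (hβ : 0 < β)
    (hA : 0 ≤ A) (hB : 0 ≤ B) (h : ∀ R > 0, X ≤ A * R ^ α + B * R ^ (-β)) :
    X ≤ 2 * (A ^ (1 - α / (α + β)) * B ^ (α / (α + β))) := by
  have hθ : α / (α + β) ≤ 1 := (div_le_one (by positivity)).2 (by linarith)
  have hpos : ∀ ε > 0, X ≤ 2 * ((A + ε) ^ (1 - α / (α + β)) * (B + ε) ^ (α / (α + β))) :=
    fun ε hε ↦ by
      obtain ⟨R, hR, hR'⟩ := exists_pos_rpow_add_rpow_eq (A := A + ε) (B := B + ε)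
        (by positivity) (by positivity) (add_pos hα hβ).ne'
      rw [← hR']
      exact (h R hR).trans (by gcongr <;> linarith)
  have hcont : Continuous fun ε : ℝ ↦
      2 * ((A + ε) ^ (1 - α / (α + β)) * (B + ε) ^ (α / (α + β))) :=
    continuous_const.mul <|
      ((continuous_const.add continuous_id).rpow_const fun _ ↦ .inr (sub_nonneg.2 hθ)).mul <|
        (continuous_const.add continuous_id).rpow_const fun _ ↦ .inr (by positivity)
  have hlim := (hcont.tendsto 0).mono_left (nhdsWithin_le_nhds (s := Set.Ioi 0))
  simp only [add_zero] at hlim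
  exact ge_of_tendsto hlim (eventually_nhdsWithin_of_forall hpos)

end Optimization

section HighFrequency

lemma exists_hasTemperateGrowth_eq_rpow_norm {E : Type*} [NormedAddCommGroup E]
    [InnerProductSpace ℝ E] (r : ℝ) :
    ∃ h : E → ℝ, h.HasTemperateGrowth ∧ ∀ ξ, 2 ≤ ‖ξ‖ → h ξ = ‖ξ‖ ^ r := by
  -- With `u = (1 + ‖ξ‖²)⁻¹` one has `‖ξ‖ ^ r = (1 + ‖ξ‖²) ^ (r / 2) * (1 - u) ^ (r / 2)`, and the
  -- cutoff `β` removes the singularity at `u = 1`, that is, at `ξ = 0`.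
  let β : ContDiffBump (0 : ℝ) := ⟨1 / 4, 1 / 2, by norm_num, by norm_num⟩
  let H : ℝ → ℝ := fun u ↦ (1 - u) ^ (r / 2) * β u
  have hH : H.HasTemperateGrowth := by
    refine (β.hasCompactSupport.mul_left).hasTemperateGrowth (contDiff_iff_contDiffAt.2 fun u ↦ ?_)
    rcases lt_or_ge u 1 with hu | hu
    · exact ((contDiffAt_const.sub contDiffAt_id).rpow_const_of_ne (sub_pos.2 hu).ne').mul
        β.contDiffAt
    · have hsupp : u ∉ tsupport β := by
        rw [β.tsupport_eq, mem_closedBall, dist_zero_right, not_le]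
        exact (by norm_num : (1 / 2 : ℝ) < 1).trans_le (hu.trans (le_abs_self u))
      refine (contDiffAt_const (c := 0)).congr_of_eventuallyEq ?_
      filter_upwards [notMem_tsupport_iff_eventuallyEq.1 hsupp] with v hv
      simp [hv]
  refine ⟨fun ξ ↦ (1 + ‖ξ‖ ^ 2) ^ (r / 2) * H ((1 + ‖ξ‖ ^ 2) ^ (-1 : ℝ)), ?_, fun ξ hξ ↦ ?_⟩
  · exact (Function.hasTemperateGrowth_one_add_norm_sq_rpow E (r / 2)).mul
      (hH.comp (Function.hasTemperateGrowth_one_add_norm_sq_rpow E (-1)))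
  · have hpos : 0 < 1 + ‖ξ‖ ^ 2 := by positivity
    have hle : (1 + ‖ξ‖ ^ 2)⁻¹ ≤ 1 / 4 := by
      rw [inv_le_comm₀ hpos (by norm_num)]
      nlinarith
    have hβ : β (1 + ‖ξ‖ ^ 2)⁻¹ = 1 := β.one_of_mem_closedBall <| by
      rw [mem_closedBall, dist_zero_right, Real.norm_of_nonneg (by positivity)]
      exact hle
    have hsub : (1 + ‖ξ‖ ^ 2) * (1 - (1 + ‖ξ‖ ^ 2)⁻¹) = ‖ξ‖ ^ 2 := by
      rw [mul_sub, mul_inv_cancel₀ hpos.ne']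
      ring
    simp only [H, Real.rpow_neg_one, hβ, mul_one]
    rw [← Real.mul_rpow hpos.le (by linarith), hsub, ← Real.rpow_natCast_mul (norm_nonneg ξ)]
    congr 1
    push_cast
    ring

end HighFrequency

section Decay

lemma fourierInv_comp_smul (f : V → ℂ) {c : ℝ} (hc : 0 < c) (x : V) :
    𝓕⁻ (fun ξ ↦ f (c • ξ)) x = ((c ^ finrank ℝ V)⁻¹ : ℝ) * 𝓕⁻ f (c⁻¹ • x) := by
  have h := Measure.integral_comp_smul volume (fun ξ ↦ 𝐞 (inner ℝ ξ (c⁻¹ • x)) • f ξ) c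
  rw [abs_of_pos (by positivity), Complex.real_smul] at h
  rw [fourierInv_eq, fourierInv_eq, ← h]
  simp only [inner_smul_left, inner_smul_right, conj_trivial, inv_mul_cancel_left₀ hc.ne']

lemma fourierInv_mul_fourier {f g : V → ℂ} (hf : Integrable f) (hg : Integrable g) (x : V) :
    𝓕⁻ (fun ξ ↦ g ξ * 𝓕 f ξ) x = ∫ y, f y * 𝓕⁻ g (x - y) := by
  have hgx : Integrable fun ξ ↦ 𝐞 (inner ℝ ξ x) • g ξ := by
    simpa using (fourierIntegral_convergent_iff (f := g) (-x)).2 hg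
  calc 𝓕⁻ (fun ξ ↦ g ξ * 𝓕 f ξ) x = ∫ ξ, 𝓕 f ξ * (𝐞 (inner ℝ ξ x) • g ξ) := by
        rw [fourierInv_eq]
        exact integral_congr_ae (.of_forall fun ξ ↦ by
          simp only [mul_comm (g ξ), mul_smul_comm])
    _ = ∫ y, f y * 𝓕 (fun ξ ↦ 𝐞 (inner ℝ ξ x) • g ξ) y := by
        simpa only [ContinuousLinearMap.mul_apply', flip_innerₗ] using!
          VectorFourier.integral_bilin_fourierIntegral_eq_flip (.mul ℂ ℂ) (L := innerₗ V)
            continuous_fourierChar continuous_inner hf hgx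
    _ = ∫ y, f y * 𝓕⁻ g (x - y) := by
        simp only [fourier_eq, fourierInv_eq, smul_smul, ← AddChar.map_add_eq_mul, inner_sub_right,
          neg_add_eq_sub]

lemma schwartzMap_isBigO_one_add_norm_rpow {E F : Type*} [NormedAddCommGroup E] [NormedSpace ℝ E]
    [NormedAddCommGroup F] [NormedSpace ℝ F] (φ : 𝓢(E, F)) (a : ℝ) :
    φ =O[⊤] fun x ↦ (1 + ‖x‖) ^ (-a) := by
  obtain ⟨N, hN⟩ := exists_nat_ge a
  refine isBigO_top.2
    ⟨2 ^ N * (Finset.Iic (N, 0)).sup (fun m ↦ SchwartzMap.seminorm ℝ m.1 m.2) φ, fun x ↦ ?_⟩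
  have hpos : 0 < 1 + ‖x‖ := by positivity
  have h := SchwartzMap.one_add_le_sup_seminorm_apply (𝕜 := ℝ) (m := (N, 0)) le_rfl le_rfl φ x
  rw [norm_iteratedFDeriv_zero] at h
  rw [Real.norm_of_nonneg (by positivity), Real.rpow_neg hpos.le, ← div_eq_mul_inv,
    le_div_iff₀ (by positivity), mul_comm]
  refine le_trans ?_ h
  gcongr
  rw [← Real.rpow_natCast]
  exact Real.rpow_le_rpow_of_exponent_le (by simp) hN

lemma integrable_one_add_norm_rpow_mul_schwartzMap (φ : 𝓢(V, ℂ)) (a : ℝ) :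
    Integrable fun x ↦ (1 + ‖x‖) ^ a * ‖φ x‖ := by
  have hcont : Continuous fun x : V ↦ (1 + ‖x‖) ^ a :=
    (continuous_const.add continuous_norm).rpow_const fun x ↦
      .inl (add_pos_of_pos_of_nonneg one_pos (norm_nonneg x)).ne'
  have hO := (isBigO_refl (fun x : V ↦ (1 + ‖x‖) ^ a) ⊤).mul
    (schwartzMap_isBigO_one_add_norm_rpow φ (a + (finrank ℝ V + 1))).norm_left
  refine hO.integrable (hcont.mul φ.continuous.norm).aestronglyMeasurable ?_
  refine (integrable_one_add_norm (lt_add_one (finrank ℝ V : ℝ))).congr (.of_forall fun x ↦ ?_)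
  have hpos : 0 < 1 + ‖x‖ := by positivity
  dsimp only
  rw [← Real.rpow_add hpos]
  ring_nf

lemma one_add_norm_sub_rpow_neg_le {E : Type*} [SeminormedAddCommGroup E] {a : ℝ} (ha : 0 ≤ a)
    (x y : E) : (1 + ‖x - y‖) ^ (-a) ≤ (1 + ‖x‖) ^ (-a) * (1 + ‖y‖) ^ a := by
  have htri : 1 + ‖x‖ ≤ (1 + ‖x - y‖) * (1 + ‖y‖) := by
    nlinarith [norm_le_norm_sub_add x y, mul_nonneg (norm_nonneg (x - y)) (norm_nonneg y)]
  have hrpow := Real.rpow_le_rpow (by positivity) htri ha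
  rw [Real.mul_rpow (by positivity) (by positivity)] at hrpow
  rw [Real.rpow_neg (by positivity), Real.rpow_neg (by positivity), ← div_eq_inv_mul,
    inv_le_comm₀ (by positivity) (by positivity), inv_div, div_le_iff₀ (by positivity)]
  exact hrpow

lemma isBigO_integral_mul_sub {f k : V → ℂ} {a : ℝ} (ha : 0 ≤ a)
    (hf : Integrable fun y ↦ (1 + ‖y‖) ^ a * ‖f y‖) (hk : k =O[⊤] fun x ↦ (1 + ‖x‖) ^ (-a)) :
    (fun x ↦ ∫ y, f y * k (x - y)) =O[⊤] fun x ↦ (1 + ‖x‖) ^ (-a) := by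
  obtain ⟨C, hC, hk⟩ := hk.exists_nonneg
  have hk : ∀ x, ‖k x‖ ≤ C * (1 + ‖x‖) ^ (-a) := fun x ↦ by
    simpa only [Real.norm_of_nonneg (Real.rpow_nonneg (add_nonneg zero_le_one (norm_nonneg x)) _)]
      using isBigOWith_top.1 hk x
  refine isBigO_top.2 ⟨C * ∫ y, (1 + ‖y‖) ^ a * ‖f y‖, fun x ↦ ?_⟩
  rw [mul_right_comm, ← integral_const_mul]
  refine norm_integral_le_of_norm_le (hf.const_mul _) (.of_forall fun y ↦ ?_)
  calc ‖f y * k (x - y)‖ ≤ ‖f y‖ * (C * (1 + ‖x - y‖) ^ (-a)) := by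
        rw [norm_mul]
        gcongr
        exact hk (x - y)
    _ ≤ ‖f y‖ * (C * ((1 + ‖x‖) ^ (-a) * (1 + ‖y‖) ^ a)) := by
        gcongr
        exact one_add_norm_sub_rpow_neg_le ha x y
    _ = C * ‖(1 + ‖x‖) ^ (-a)‖ * ((1 + ‖y‖) ^ a * ‖f y‖) := by
        rw [Real.norm_of_nonneg (by positivity)]
        ring

lemma memLp_of_isBigO_one_add_norm_rpow {g : V → ℂ} (hg : AEStronglyMeasurable g) {a q : ℝ}
    (hq : 0 < q) (ha : finrank ℝ V / q < a) (hO : g =O[⊤] fun x ↦ (1 + ‖x‖) ^ (-a)) :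
    MemLp g (ENNReal.ofReal q) := by
  rw [← integrable_norm_rpow_iff hg (by simpa using hq) ENNReal.ofReal_ne_top,
    ENNReal.toReal_ofReal hq.le]
  have hO' := hO.norm_left.rpow hq.le (.of_forall fun x ↦ by positivity)
  refine hO'.integrable (hg.norm.aemeasurable.pow_const q).aestronglyMeasurable ?_
  refine (integrable_one_add_norm ((div_lt_iff₀ hq).1 ha)).congr (.of_forall fun x ↦ ?_)
  simp only [← Real.rpow_mul (add_nonneg zero_le_one (norm_nonneg x)), neg_mul]

end Decay

section LowFrequency

lemma le_add_div_of_le_mul_half_add {E : Type*} [SeminormedAddCommGroup E] [NormedSpace ℝ E]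
    {w : E → ℝ} {M C l : ℝ} (hl : l ∈ Set.Ico (0 : ℝ) 1) (hC : 0 ≤ C) (hM : 0 ≤ M)
    (hball : ∀ x, ‖x‖ ≤ 1 → w x ≤ M) (hw : ∀ x, w x ≤ l * w ((2 : ℝ)⁻¹ • x) + C) (x : E) :
    w x ≤ M + C / (1 - l) := by
  have hl' : 0 < 1 - l := sub_pos.2 hl.2
  have hfix : l * (M + C / (1 - l)) + C ≤ M + C / (1 - l) := by
    have : C = (1 - l) * (C / (1 - l)) := by field_simp
    nlinarith [mul_nonneg hl'.le hM]
  have hpow : ∀ n : ℕ, ∀ x : E, ‖x‖ ≤ 2 ^ n → w x ≤ M + C / (1 - l) := by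
    intro n
    induction n with
    | zero =>
      intro x hx
      have : 0 ≤ C / (1 - l) := by positivity
      linarith [hball x (by simpa using hx)]
    | succ n ih =>
      intro x hx
      have hhalf : ‖(2 : ℝ)⁻¹ • x‖ ≤ 2 ^ n := by
        rw [norm_smul, norm_inv, Real.norm_two, inv_mul_le_iff₀ two_pos, ← pow_succ']
        exact hx
      exact (hw x).trans ((add_le_add_left (mul_le_mul_of_nonneg_left (ih _ hhalf) hl.1) C).trans
        hfix)
  obtain ⟨n, hn⟩ := pow_unbounded_of_one_lt ‖x‖ one_lt_two
  exact hpow n x hn.le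

lemma one_add_norm_rpow_le_two_rpow_mul {E : Type*} [SeminormedAddCommGroup E] [NormedSpace ℝ E]
    {a : ℝ} (ha : 0 ≤ a) (x : E) :
    (1 + ‖x‖) ^ a ≤ 2 ^ a * (1 + ‖(2 : ℝ)⁻¹ • x‖) ^ a := by
  rw [← Real.mul_rpow zero_le_two (by positivity), norm_smul, norm_inv, Real.norm_two]
  gcongr
  linarith

lemma fourierInv_eq_of_sub_comp_two_smul_eq {L : V → ℂ} (hL : Integrable L) {r : ℝ}
    {ψ : 𝓢(V, ℂ)} (hψ : ∀ ξ, L ξ - (2 ^ (-r) : ℝ) * L ((2 : ℝ) • ξ) = ψ ξ) (x : V) :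
    𝓕⁻ L x = (2 ^ (-(r + finrank ℝ V)) : ℝ) * 𝓕⁻ L ((2 : ℝ)⁻¹ • x) + 𝓕⁻ ψ x := by
  have hadd : L = ((2 ^ (-r) : ℝ) : ℂ) • (fun ξ ↦ L ((2 : ℝ) • ξ)) + ψ := by
    ext ξ
    simp [← hψ]
  conv_lhs => rw [hadd]
  rw [fourierInv_add_of_integrable ((hL.comp_smul two_ne_zero).smul _) ψ.integrable,
    fourierInv_const_smul, Pi.add_apply, Pi.smul_apply, fourierInv_comp_smul L two_pos,
    SchwartzMap.fourierInv_coe, smul_eq_mul, ← mul_assoc, ← Complex.ofReal_mul, neg_add,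
    Real.rpow_add two_pos, Real.rpow_neg zero_le_two (finrank ℝ V : ℝ), Real.rpow_natCast]

lemma fourierInv_isBigO_of_sub_comp_two_smul_eq {L : V → ℂ} (hL : Integrable L) {r a : ℝ}
    {ψ : 𝓢(V, ℂ)} (hψ : ∀ ξ, L ξ - (2 ^ (-r) : ℝ) * L ((2 : ℝ) • ξ) = ψ ξ)
    (ha : a ∈ Set.Ico 0 (r + finrank ℝ V)) :
    𝓕⁻ L =O[⊤] fun x ↦ (1 + ‖x‖) ^ (-a) := by
  obtain ⟨C, hC, hψC⟩ := (schwartzMap_isBigO_one_add_norm_rpow (𝓕⁻ ψ) a).exists_nonneg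
  have hiff : ∀ (c t : ℝ) (x : V), t ≤ c * ‖(1 + ‖x‖) ^ (-a)‖ ↔ (1 + ‖x‖) ^ a * t ≤ c :=
    fun c t x ↦ by
      have hpos : 0 < 1 + ‖x‖ := by positivity
      rw [Real.norm_of_nonneg (by positivity), Real.rpow_neg hpos.le, ← div_eq_mul_inv,
        le_div_iff₀' (by positivity)]
  simp only [isBigOWith_top, hiff] at hψC
  refine isBigO_top.2 ⟨2 ^ a * (∫ ξ, ‖L ξ‖) + C / (1 - 2 ^ (a - (r + finrank ℝ V))), fun x ↦
    (hiff _ _ x).2 <| le_add_div_of_le_mul_half_add (w := fun x ↦ (1 + ‖x‖) ^ a * ‖𝓕⁻ L x‖)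
      ⟨by positivity, Real.rpow_lt_one_of_one_lt_of_neg one_lt_two (sub_neg.2 ha.2)⟩
      hC (by positivity) (fun x hx ↦ ?_) (fun x ↦ ?_) x⟩
  · have hx2 : 1 + ‖x‖ ≤ 2 := by linarith
    exact mul_le_mul (Real.rpow_le_rpow (by positivity) hx2 ha.1)
      (norm_fourierInv_le_integral_norm L x) (norm_nonneg _) (by positivity)
  · have hrec := norm_add_le ((2 ^ (-(r + finrank ℝ V)) : ℝ) * 𝓕⁻ L ((2 : ℝ)⁻¹ • x)) (𝓕⁻ ψ x)
    rw [← fourierInv_eq_of_sub_comp_two_smul_eq hL hψ, norm_mul, Complex.norm_real,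
      Real.norm_of_nonneg (by positivity)] at hrec
    calc (1 + ‖x‖) ^ a * ‖𝓕⁻ L x‖
        ≤ (1 + ‖x‖) ^ a * (2 ^ (-(r + finrank ℝ V)) * ‖𝓕⁻ L ((2 : ℝ)⁻¹ • x)‖) +
            (1 + ‖x‖) ^ a * ‖𝓕⁻ ψ x‖ := by
          rw [← mul_add]
          gcongr
      _ ≤ 2 ^ a * (1 + ‖(2 : ℝ)⁻¹ • x‖) ^ a *
            (2 ^ (-(r + finrank ℝ V)) * ‖𝓕⁻ L ((2 : ℝ)⁻¹ • x)‖) + C := by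
          gcongr
          · exact one_add_norm_rpow_le_two_rpow_mul ha.1 x
          · exact hψC x
      _ = _ := by
          rw [sub_eq_add_neg, Real.rpow_add two_pos]
          ring

end LowFrequency

section FractionalDerivative

lemma integrableOn_ball_rpow_norm [Nontrivial V] {r : ℝ} (hr : -(finrank ℝ V : ℝ) < r) (R : ℝ) :
    IntegrableOn (fun ξ : V ↦ ‖ξ‖ ^ r) (ball 0 R) := by
  refine integrableOn_ball_of_norm_le_rpow (α := -r) (C := 1) finrank_pos (neg_lt.1 hr)
    (.of_forall fun ξ ↦ ?_) (measurable_norm.pow_const r).aestronglyMeasurable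
  rw [neg_neg, one_mul, Real.norm_of_nonneg (by positivity)]

lemma two_rpow_neg_mul_rpow_norm_two_smul {E : Type*} [SeminormedAddCommGroup E]
    [NormedSpace ℝ E] (r : ℝ) (ξ : E) : 2 ^ (-r) * ‖(2 : ℝ) • ξ‖ ^ r = ‖ξ‖ ^ r := by
  rw [norm_smul, Real.norm_two, Real.mul_rpow zero_le_two (norm_nonneg ξ), ← mul_assoc,
    ← Real.rpow_add two_pos, neg_add_cancel, Real.rpow_zero, one_mul]

lemma exists_rpow_norm_eq_add [Nontrivial V] {r : ℝ} (hr : -(finrank ℝ V : ℝ) < r) :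
    ∃ (L : V → ℂ) (h : V → ℝ), Integrable L ∧ h.HasTemperateGrowth ∧
      (∀ ξ, ((‖ξ‖ ^ r : ℝ) : ℂ) = L ξ + h ξ) ∧
      ∀ a ∈ Set.Ico 0 (r + finrank ℝ V), 𝓕⁻ L =O[⊤] fun x ↦ (1 + ‖x‖) ^ (-a) := by
  obtain ⟨h, hh, hh2⟩ := exists_hasTemperateGrowth_eq_rpow_norm (E := V) r
  have hL : Integrable fun ξ ↦ ‖ξ‖ ^ r - h ξ := by
    refine (integrableOn_iff_integrable_of_support_subset (s := ball 0 2) fun ξ hξ ↦ ?_).1 <|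
      (integrableOn_ball_rpow_norm hr 2).sub <|
        (hh.1.continuous.continuousOn.integrableOn_compact (isCompact_closedBall 0 2)).mono_set
          ball_subset_closedBall
    by_contra hξ'
    exact hξ (by simp only [hh2 ξ (by simpa using hξ'), sub_self])
  have hLc : Integrable fun ξ ↦ ((‖ξ‖ ^ r - h ξ : ℝ) : ℂ) := hL.ofReal
  let ψ : V → ℂ := fun ξ ↦ (2 ^ (-r) * h ((2 : ℝ) • ξ) - h ξ : ℝ)
  have hψ : HasCompactSupport ψ := by
    refine .intro (isCompact_closedBall 0 2) fun ξ hξ ↦ ?_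
    have hξ2 : 2 ≤ ‖ξ‖ := (by simpa using hξ : 2 < ‖ξ‖).le
    have h2ξ : 2 ≤ ‖(2 : ℝ) • ξ‖ := by
      rw [norm_smul, Real.norm_two]
      linarith
    simp only [ψ, hh2 ξ hξ2, hh2 _ h2ξ, two_rpow_neg_mul_rpow_norm_two_smul, sub_self,
      Complex.ofReal_zero]
  have hψ' : ContDiff ℝ (⊤ : ℕ∞) ψ := Complex.ofRealCLM.contDiff.comp
    ((contDiff_const.mul (hh.1.comp (contDiff_const_smul 2))).sub hh.1)
  refine ⟨_, h, hLc, hh, fun ξ ↦ by simp, fun a ha ↦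
    fourierInv_isBigO_of_sub_comp_two_smul_eq hLc (ψ := hψ.toSchwartzMap hψ') (fun ξ ↦ ?_) ha⟩
  rw [HasCompactSupport.toSchwartzMap_toFun, ← two_rpow_neg_mul_rpow_norm_two_smul r ξ]
  simp only [ψ]
  push_cast
  ring

lemma integrable_rpow_norm_mul_schwartzMap [Nontrivial V] {r : ℝ}
    (hr : -(finrank ℝ V : ℝ) < r) (φ : 𝓢(V, ℂ)) :
    Integrable fun ξ ↦ ((‖ξ‖ ^ r : ℝ) : ℂ) * φ ξ := by
  obtain ⟨L, h, hL, hh, hLh, -⟩ := exists_rpow_norm_eq_add hr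
  refine ((hL.mul_of_top_left (φ.memLp_top _)).add
    (SchwartzMap.smulLeftCLM ℂ h φ).integrable).congr (.of_forall fun ξ ↦ ?_)
  simp [hLh, SchwartzMap.smulLeftCLM_apply_apply hh, add_mul]

lemma memLp_two_rpow_norm_mul_schwartzMap [Nontrivial V] {r : ℝ}
    (hr : -(finrank ℝ V : ℝ) < 2 * r) (φ : 𝓢(V, ℂ)) :
    MemLp (fun ξ ↦ ((‖ξ‖ ^ r : ℝ) : ℂ) * φ ξ) 2 := by
  have hm : AEStronglyMeasurable fun ξ : V ↦ ((‖ξ‖ ^ r : ℝ) : ℂ) * φ ξ :=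
    (measurable_norm.pow_const r).complex_ofReal.aestronglyMeasurable.mul
      φ.continuous.aestronglyMeasurable
  rw [memLp_two_iff_integrable_sq_norm hm]
  refine ((integrable_rpow_norm_mul_schwartzMap hr φ).mul_of_top_left
    (φ.memLp_top _)).norm.congr (.of_forall fun ξ ↦ ?_)
  simp only [Pi.mul_apply, norm_mul, Complex.norm_real, Real.norm_of_nonneg,
    Real.rpow_nonneg (norm_nonneg ξ), mul_pow]
  rw [← Real.rpow_mul_natCast (norm_nonneg ξ)]
  push_cast
  ring_nf

lemma fourierInv_rpow_norm_mul_fourier_isBigO [Nontrivial V] {r a : ℝ}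
    (ha : a ∈ Set.Ico 0 (r + finrank ℝ V)) (f : 𝓢(V, ℂ)) :
    𝓕⁻ (fun ξ ↦ ((‖ξ‖ ^ r : ℝ) : ℂ) * 𝓕 f ξ) =O[⊤] fun x ↦ (1 + ‖x‖) ^ (-a) := by
  have hr : -(finrank ℝ V : ℝ) < r := by linarith [ha.1, ha.2]
  obtain ⟨L, h, hL, hh, hLh, hdecay⟩ := exists_rpow_norm_eq_add hr
  let ψ : 𝓢(V, ℂ) := SchwartzMap.smulLeftCLM ℂ h (𝓕 f)
  have hsplit : (fun ξ ↦ ((‖ξ‖ ^ r : ℝ) : ℂ) * 𝓕 f ξ) = (fun ξ ↦ L ξ * 𝓕 f ξ) + ψ := by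
    ext ξ
    simp [ψ, hLh, SchwartzMap.smulLeftCLM_apply_apply hh, add_mul]
  have hLf : Integrable fun ξ ↦ L ξ * 𝓕 f ξ := hL.mul_of_top_left ((𝓕 f).memLp_top _)
  rw [hsplit, fourierInv_add_of_integrable hLf ψ.integrable]
  refine .add ?_ (by simpa only [SchwartzMap.fourierInv_coe]
    using schwartzMap_isBigO_one_add_norm_rpow (𝓕⁻ ψ) a)
  simp only [SchwartzMap.fourier_coe, funext (fourierInv_mul_fourier f.integrable hL)]
  exact isBigO_integral_mul_sub ha.1 (integrable_one_add_norm_rpow_mul_schwartzMap f a)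
    (hdecay a ha)

lemma memLp_fourierInv_rpow_norm_mul_fourier [Nontrivial V] {r q : ℝ} (hq : 0 < q)
    (hr : finrank ℝ V / q - finrank ℝ V < r) (f : 𝓢(V, ℂ)) :
    MemLp (𝓕⁻ fun ξ ↦ ((‖ξ‖ ^ r : ℝ) : ℂ) * 𝓕 f ξ) (ENNReal.ofReal q) := by
  have hd : 0 ≤ finrank ℝ V / q := by positivity
  obtain ⟨a, ha, ha'⟩ := exists_between (sub_lt_iff_lt_add.1 hr)
  refine memLp_of_isBigO_one_add_norm_rpow (continuous_fourierInv_of_integrable <|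
    integrable_rpow_norm_mul_schwartzMap (by linarith) (𝓕 f)).aestronglyMeasurable hq ha
    (fourierInv_rpow_norm_mul_fourier_isBigO ⟨hd.trans ha.le, ha'⟩ f)

end FractionalDerivative

section Interpolation

lemma setLIntegral_closedBall_enorm_le_eLpNorm_fourierInv {g : V → ℂ} (h₁ : Integrable g)
    (h₂ : MemLp g 2) {q : ℝ} (hq : q ∈ Set.Icc (1 : ℝ) 2) {ρ : ℝ} (hρ : 0 ≤ ρ) :
    ∫⁻ ξ in closedBall 0 ρ, ‖g ξ‖ₑ ≤ volume (ball (0 : V) 1) ^ (1 / q) *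
      eLpNorm (𝓕⁻ g) (.ofReal q) volume * .ofReal (ρ ^ (finrank ℝ V / q)) := by
  have hq₀ : 0 ≤ 1 / q := one_div_nonneg.2 (zero_le_one.trans hq.1)
  have hρq : ENNReal.ofReal (ρ ^ finrank ℝ V) ^ (1 / q) = .ofReal (ρ ^ (finrank ℝ V / q)) := by
    rw [ENNReal.ofReal_rpow_of_nonneg (by positivity) hq₀, ← Real.rpow_natCast,
      ← Real.rpow_mul hρ, mul_one_div]
  calc ∫⁻ ξ in closedBall 0 ρ, ‖g ξ‖ₑ
      ≤ volume (closedBall (0 : V) ρ) ^ (1 / q) * eLpNorm (𝓕 g) (.ofReal q) volume :=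
        setLIntegral_enorm_le_eLpNorm_fourier h₁ h₂ measurableSet_closedBall
          measure_closedBall_lt_top.ne hq
    _ = _ := by
        rw [Measure.addHaar_closedBall volume 0 hρ, ENNReal.mul_rpow_of_nonneg _ _ hq₀, hρq,
          eLpNorm_fourierInv_eq_eLpNorm_fourier h₁]
        ring

lemma enorm_ofReal_rpow_norm {E : Type*} [SeminormedAddGroup E] (r : ℝ) (ξ : E) :
    ‖((‖ξ‖ ^ r : ℝ) : ℂ)‖ₑ = .ofReal (‖ξ‖ ^ r) := by
  rw [← ofReal_norm, Complex.norm_real, Real.norm_of_nonneg (by positivity)]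

lemma exists_lintegral_rpow_norm_mul_enorm_le [Nontrivial V] {p q s r : ℝ}
    (hp : p ∈ Set.Icc (1 : ℝ) 2) (hq : q ∈ Set.Icc (1 : ℝ) 2)
    (hs : 0 < s + finrank ℝ V / p) (hr : s - r + finrank ℝ V / q < 0) :
    ∃ K > 0, ∀ g : V → ℂ, Integrable g → MemLp g 2 →
      Integrable (fun ξ ↦ ((‖ξ‖ ^ r : ℝ) : ℂ) * g ξ) →
      MemLp (fun ξ ↦ ((‖ξ‖ ^ r : ℝ) : ℂ) * g ξ) 2 → ∀ R > 0,
      ∫⁻ ξ, .ofReal (‖ξ‖ ^ s) * ‖g ξ‖ₑ ≤ .ofReal K *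
        (eLpNorm (𝓕⁻ g) (.ofReal p) volume * .ofReal (R ^ (s + finrank ℝ V / p)) +
          eLpNorm (𝓕⁻ fun ξ ↦ ((‖ξ‖ ^ r : ℝ) : ℂ) * g ξ) (.ofReal q) volume *
            .ofReal (R ^ (s - r + finrank ℝ V / q))) := by
  obtain ⟨K, hK, H⟩ := exists_lintegral_rpow_norm_mul_le (μ := (volume : Measure V)) hs hr
  let v := volume.real (ball (0 : V) 1)
  have hv : 0 < v :=
    ENNReal.toReal_pos (measure_ball_pos volume 0 one_pos).ne' measure_ball_lt_top.ne
  have hvr (t : ℝ) : volume (ball (0 : V) 1) ^ t = .ofReal (v ^ t) := by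
    rw [← ENNReal.ofReal_rpow_of_pos hv, ofReal_measureReal measure_ball_lt_top.ne]
  refine ⟨K * max (v ^ (1 / p)) (v ^ (1 / q)), by positivity, fun g h₁ h₂ h₁' h₂' R hR ↦ ?_⟩
  have hA (ρ : ℝ) (hρ : 0 < ρ) :=
    setLIntegral_closedBall_enorm_le_eLpNorm_fourierInv h₁ h₂ hp hρ.le
  have hB (ρ : ℝ) (hρ : 0 < ρ) :=
    setLIntegral_closedBall_enorm_le_eLpNorm_fourierInv h₁' h₂' hq hρ.le
  simp only [enorm_mul, enorm_ofReal_rpow_norm, hvr] at hA hB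
  refine (H _ _ _ hA hB R hR).trans ?_
  rw [ENNReal.ofReal_mul hK.le, mul_assoc (ENNReal.ofReal K),
    mul_add (ENNReal.ofReal (max _ _)), mul_assoc, mul_assoc]
  gcongr
  · exact le_max_left _ _
  · exact le_max_right _ _

lemma exists_integral_rpow_norm_mul_norm_le [Nontrivial V] {p q s r : ℝ}
    (hp : p ∈ Set.Icc (1 : ℝ) 2) (hq : q ∈ Set.Icc (1 : ℝ) 2)
    (hs : 0 < s + finrank ℝ V / p) (hr : s - r + finrank ℝ V / q < 0) :
    ∃ K > 0, ∀ g : V → ℂ, Integrable g → MemLp g 2 →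
      Integrable (fun ξ ↦ ((‖ξ‖ ^ r : ℝ) : ℂ) * g ξ) →
      MemLp (fun ξ ↦ ((‖ξ‖ ^ r : ℝ) : ℂ) * g ξ) 2 → MemLp (𝓕⁻ g) (.ofReal p) →
      MemLp (𝓕⁻ fun ξ ↦ ((‖ξ‖ ^ r : ℝ) : ℂ) * g ξ) (.ofReal q) → ∀ R > 0,
      ∫ ξ, ‖ξ‖ ^ s * ‖g ξ‖ ≤
        K * (eLpNorm (𝓕⁻ g) (.ofReal p) volume).toReal * R ^ (s + finrank ℝ V / p) +
        K * (eLpNorm (𝓕⁻ fun ξ ↦ ((‖ξ‖ ^ r : ℝ) : ℂ) * g ξ) (.ofReal q) volume).toReal *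
          R ^ (s - r + finrank ℝ V / q) := by
  obtain ⟨K, hK, H⟩ := exists_lintegral_rpow_norm_mul_enorm_le hp hq hs hr
  refine ⟨K, hK, fun g h₁ h₂ h₁' h₂' hA hB R hR ↦ ?_⟩
  refine (Real.le_norm_self _).trans ?_
  rw [← toReal_enorm]
  refine ENNReal.toReal_le_of_le_ofReal (by positivity) ?_
  calc ‖∫ ξ, ‖ξ‖ ^ s * ‖g ξ‖‖ₑ
      ≤ ∫⁻ ξ, ‖‖ξ‖ ^ s * ‖g ξ‖‖ₑ := enorm_integral_le_lintegral_enorm _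
    _ = ∫⁻ ξ, .ofReal (‖ξ‖ ^ s) * ‖g ξ‖ₑ := by
        simp only [enorm_mul, enorm_norm, enorm_of_nonneg (Real.rpow_nonneg (norm_nonneg _) s)]
    _ ≤ _ := H g h₁ h₂ h₁' h₂' R hR
    _ = _ := by
        rw [ENNReal.ofReal_add (by positivity) (by positivity),
          ENNReal.ofReal_mul (by positivity), ENNReal.ofReal_mul hK.le,
          ENNReal.ofReal_mul (p := K * _) (by positivity), ENNReal.ofReal_mul hK.le,
          ENNReal.ofReal_toReal hA.eLpNorm_ne_top, ENNReal.ofReal_toReal hB.eLpNorm_ne_top]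
        ring

lemma exists_integral_rpow_norm_mul_norm_fourier_le [Nontrivial V] {p q s r : ℝ}
    (hp : p ∈ Set.Icc (1 : ℝ) 2) (hq : q ∈ Set.Icc (1 : ℝ) 2)
    (hs : 0 < s + finrank ℝ V / p) (hr : s - r + finrank ℝ V / q < 0) :
    ∃ K > 0, ∀ f : 𝓢(V, ℂ), ∀ R > 0,
      ∫ ξ, ‖ξ‖ ^ s * ‖𝓕 (f : V → ℂ) ξ‖ ≤
        K * (eLpNorm f (.ofReal p) volume).toReal * R ^ (s + finrank ℝ V / p) +
        K * (eLpNorm (𝓕⁻ fun ξ ↦ (‖ξ‖ ^ r : ℝ) * 𝓕 (f : V → ℂ) ξ) (.ofReal q) volume).toReal *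
          R ^ (s - r + finrank ℝ V / q) := by
  have hd : 0 < (finrank ℝ V : ℝ) := Nat.cast_pos.2 finrank_pos
  have hq₀ : 0 < q := one_pos.trans_le hq.1
  have hdp : finrank ℝ V / p ≤ finrank ℝ V := div_le_self hd.le hp.1
  have hdq : finrank ℝ V / 2 ≤ finrank ℝ V / q := by gcongr; exact hq.2
  have hrq : finrank ℝ V / q - finrank ℝ V < r := by linarith
  have hr₁ : -(finrank ℝ V : ℝ) < r := by linarith
  have hr₂ : -(finrank ℝ V : ℝ) < 2 * r := by linarith
  obtain ⟨K, hK, H⟩ := exists_integral_rpow_norm_mul_norm_le hp hq hs hr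
  refine ⟨K, hK, fun f R hR ↦ ?_⟩
  have hf : 𝓕⁻ (⇑(𝓕 f : 𝓢(V, ℂ))) = f := by
    rw [← SchwartzMap.fourierInv_coe, FourierTransform.fourierInv_fourier_eq]
  have key := H _ (𝓕 f).integrable ((𝓕 f).memLp 2)
    (integrable_rpow_norm_mul_schwartzMap hr₁ (𝓕 f))
    (memLp_two_rpow_norm_mul_schwartzMap hr₂ (𝓕 f)) (hf ▸ f.memLp _)
    (memLp_fourierInv_rpow_norm_mul_fourier hq₀ hrq f) R hR
  rwa [hf] at key

theorem stmt0_general [Nontrivial V] (p q s r θ : ℝ)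
    (hp : p ∈ Set.Icc (1 : ℝ) 2) (hq : q ∈ Set.Icc (1 : ℝ) 2)
    (hs : -(finrank ℝ V / p) < s) (hr : s + finrank ℝ V / q < r)
    (hθ : θ = (s + finrank ℝ V / p) / (r + finrank ℝ V * (1 / p - 1 / q))) :
    θ ∈ Set.Ioo (0 : ℝ) 1 ∧
    ∃ C > 0, ∀ f : 𝓢(V, ℂ),
      ∫ ξ, ‖ξ‖ ^ s * ‖𝓕 (f : V → ℂ) ξ‖ ≤
        C * (eLpNorm f (.ofReal p) volume).toReal ^ (1 - θ) *
          (eLpNorm (𝓕⁻ fun ξ ↦ (‖ξ‖ ^ r : ℝ) * 𝓕 (f : V → ℂ) ξ) (.ofReal q) volume).toReal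
            ^ θ := by
  obtain ⟨α, hα⟩ : ∃ α, α = s + finrank ℝ V / p := ⟨_, rfl⟩
  obtain ⟨β, hβ⟩ : ∃ β, -β = s - r + finrank ℝ V / q := ⟨_, neg_neg _⟩
  have hα₀ : 0 < α := by linarith
  have hβ₀ : 0 < β := by linarith
  have hθ' : θ = α / (α + β) := by rw [hθ, hα]; congr 1; linear_combination hβ
  refine ⟨hθ' ▸ ⟨by positivity, (div_lt_one (by positivity)).2 (by linarith)⟩, ?_⟩
  obtain ⟨K, hK, H⟩ := exists_integral_rpow_norm_mul_norm_fourier_le (V := V) hp hq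
    (by linarith) (by linarith : s - r + finrank ℝ V / q < 0)
  refine ⟨2 * K, by positivity, fun f ↦ ?_⟩
  have hK' : K ^ (1 - θ) * K ^ θ = K := by
    rw [← Real.rpow_add hK, sub_add_cancel, Real.rpow_one]
  have hle := le_two_mul_rpow_mul_rpow_of_forall_le hα₀ hβ₀ (by positivity) (by positivity)
    (hα ▸ hβ ▸ H f)
  rw [← hθ', Real.mul_rpow hK.le (by positivity), Real.mul_rpow hK.le (by positivity)] at hle
  refine hle.trans_eq ?_
  linear_combination 2 * (eLpNorm f (.ofReal p) volume).toReal ^ (1 - θ) *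
    (eLpNorm (𝓕⁻ fun ξ ↦ (‖ξ‖ ^ r : ℝ) * 𝓕 (f : V → ℂ) ξ) (.ofReal q) volume).toReal ^ θ * hK'

end Interpolation

end

theorem stmt0 (d : ℕ) (hd : 1 ≤ d) (p q s r θ : ℝ)
    (hp : p ∈ Set.Icc (1 : ℝ) 2) (hq : q ∈ Set.Icc (1 : ℝ) 2)
    (hs : -(d / p) < s) (hr : s + d / q < r)
    (hθ : θ = (s + d / p) / (r + d * (1 / p - 1 / q))) :
    θ ∈ Set.Ioo (0 : ℝ) 1 ∧
    ∃ C > 0, ∀ f : SchwartzMap (EuclideanSpace ℝ (Fin d)) ℂ,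
      sNorm d s (⇑f) ≤
        C * (eLpNorm (⇑f) (ENNReal.ofReal p) volume).toReal ^ (1 - θ) *
          (eLpNorm (fracLap d r (⇑f)) (ENNReal.ofReal q) volume).toReal ^ θ := by
  have : Nonempty (Fin d) := ⟨⟨0, hd⟩⟩
  exact stmt0_general (V := EuclideanSpace ℝ (Fin d)) p q s r θ hp hq
    (by rwa [finrank_euclideanSpace_fin]) (by rwa [finrank_euclideanSpace_fin])
    (by rwa [finrank_euclideanSpace_fin])
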